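/- Under assumptions (A1)-(A3), any global optimal solution p* of the constrained price optimization problem min_{p ∈ Ω} Q(p) is profitable, i.e., p* ≥ c componentwise. -/

import Mathlib

open Matrix

/-! Nonpositive off-diagonal entries make the objective `Q` submodular:
`Q (p ⊔ c) + Q (p ⊓ c) ≤ Q p + Q c`. The gradient of the strictly convex `Q` at `c` is
`D *ᵥ c - a ≤ 0`, so `Q c < Q q` for every `q < c`. If `c ≤ p` fails, then `p ⊓ c < c`, and the two
facts give `Q (p ⊔ c) < Q p`: raising every unprofitable price to its cost improves `p`.
This keeps `p` feasible, because `c ≤ p0 - δ`: every price that moves is and stays at most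
`p0 - δ`. -/

section QuadraticObjective

variable {ι 𝕜 : Type*} [Fintype ι]

/-- The function `½ pᵀ S p - bᵀ p`; the objective of the price optimization problem is the case
`S = D + Dᵀ`, `b = a + Dᵀ c`. -/
def quadraticObjective [Field 𝕜] (S : Matrix ι ι 𝕜) (b p : ι → 𝕜) : 𝕜 :=
  1 / 2 * (p ⬝ᵥ S *ᵥ p) - b ⬝ᵥ p

theorem quadraticObjective_add [Field 𝕜] [NeZero (2 : 𝕜)] {S : Matrix ι ι 𝕜} (hS : S.IsSymm)
    (b x d : ι → 𝕜) :
    quadraticObjective S b (x + d) =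
      quadraticObjective S b x + (S *ᵥ x - b) ⬝ᵥ d + 1 / 2 * (d ⬝ᵥ S *ᵥ d) := by
  have hcross : x ⬝ᵥ S *ᵥ d = S *ᵥ x ⬝ᵥ d := by
    rw [dotProduct_mulVec, ← mulVec_transpose, hS.eq]
  simp only [quadraticObjective, mulVec_add, dotProduct_add, add_dotProduct, sub_dotProduct,
    hcross, dotProduct_comm d (S *ᵥ x)]
  field_simp
  ring

theorem mul_add_mul_le_max_mul_max_add_min_mul_min [CommRing 𝕜] [LinearOrder 𝕜] [IsOrderedRing 𝕜]
    (x₁ x₂ y₁ y₂ : 𝕜) :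
    x₁ * x₂ + y₁ * y₂ ≤ max x₁ y₁ * max x₂ y₂ + min x₁ y₁ * min x₂ y₂ := by
  rcases le_total x₁ y₁ with h₁ | h₁ <;> rcases le_total x₂ y₂ with h₂ | h₂ <;>
    simp only [h₁, h₂, max_eq_left, max_eq_right, min_eq_left, min_eq_right]
  · rw [add_comm]
  · linear_combination mul_nonneg (sub_nonneg.2 h₁) (sub_nonneg.2 h₂)
  · linear_combination mul_nonneg (sub_nonneg.2 h₁) (sub_nonneg.2 h₂)
  · rfl

theorem dotProduct_mulVec_sup_add_inf_le [CommRing 𝕜] [LinearOrder 𝕜] [IsOrderedRing 𝕜]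
    {S : Matrix ι ι 𝕜} (hoff : Pairwise fun i j ↦ S i j ≤ 0) (x y : ι → 𝕜) :
    (x ⊔ y) ⬝ᵥ S *ᵥ (x ⊔ y) + (x ⊓ y) ⬝ᵥ S *ᵥ (x ⊓ y) ≤ x ⬝ᵥ S *ᵥ x + y ⬝ᵥ S *ᵥ y := by
  simp only [dotProduct, mulVec, Finset.mul_sum, ← Finset.sum_add_distrib, Pi.sup_apply,
    Pi.inf_apply]
  refine Finset.sum_le_sum fun i _ ↦ Finset.sum_le_sum fun j _ ↦ ?_
  obtain rfl | hij := eq_or_ne i j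
  · rcases le_total (x i) (y i) with h | h <;> simp [h, add_comm]
  · linear_combination mul_le_mul_of_nonpos_left
      (mul_add_mul_le_max_mul_max_add_min_mul_min (x i) (x j) (y i) (y j)) (hoff hij)

variable [Field 𝕜] [LinearOrder 𝕜] [IsStrictOrderedRing 𝕜] {S : Matrix ι ι 𝕜}

theorem quadraticObjective_sup_add_inf_le (hoff : Pairwise fun i j ↦ S i j ≤ 0)
    (b x y : ι → 𝕜) :
    quadraticObjective S b (x ⊔ y) + quadraticObjective S b (x ⊓ y) ≤
      quadraticObjective S b x + quadraticObjective S b y := by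
  have hlin : b ⬝ᵥ (x ⊔ y) + b ⬝ᵥ (x ⊓ y) = b ⬝ᵥ x + b ⬝ᵥ y := by
    rw [← dotProduct_add, ← dotProduct_add, add_comm (x ⊔ y), inf_add_sup]
  have hquad := dotProduct_mulVec_sup_add_inf_le hoff x y
  simp only [quadraticObjective]
  linarith

variable [StarRing 𝕜] [TrivialStar 𝕜] {a b c p : ι → 𝕜}

theorem quadraticObjective_lt_of_lt (hS : S.PosDef) (hb : S *ᵥ c ≤ b) (hpc : p < c) :
    quadraticObjective S b c < quadraticObjective S b p := by
  have hsymm : S.IsSymm := (conjTranspose_eq_transpose_of_trivial S).symm.trans hS.isHermitian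
  have hgrad : 0 ≤ (S *ᵥ c - b) ⬝ᵥ (p - c) := by
    rw [← neg_dotProduct_neg]
    exact dotProduct_nonneg_of_nonneg (by simpa using hb) (by simpa using hpc.le)
  have hcurv : 0 < (p - c) ⬝ᵥ S *ᵥ (p - c) := by
    simpa using hS.dotProduct_mulVec_pos (sub_ne_zero.2 hpc.ne)
  have hexp := quadraticObjective_add hsymm b c (p - c)
  rw [add_sub_cancel] at hexp
  linarith

theorem le_of_quadraticObjective_le_sup (hS : S.PosDef) (hoff : Pairwise fun i j ↦ S i j ≤ 0)
    (hb : S *ᵥ c ≤ b) (hp : quadraticObjective S b p ≤ quadraticObjective S b (p ⊔ c)) :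
    c ≤ p := by
  by_contra hcp
  have hlt := quadraticObjective_lt_of_lt hS hb (inf_lt_right.2 hcp)
  have hsub := quadraticObjective_sup_add_inf_le hoff b p c
  linarith

theorem constrained_optimum_profitable_general {D : Matrix ι ι 𝕜}
    (hPD : (D + Dᵀ).PosDef) (hoff : Pairwise fun i j ↦ (D + Dᵀ) i j ≤ 0) (hdc : D *ᵥ c ≤ a)
    {Ω : Set (ι → 𝕜)} (hΩ : Set.MapsTo (· ⊔ c) Ω Ω) {pstar : ι → 𝕜} (hfeas : pstar ∈ Ω)
    (hopt : IsMinOn (quadraticObjective (D + Dᵀ) (a + Dᵀ *ᵥ c)) Ω pstar) :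
    c ≤ pstar := by
  refine le_of_quadraticObjective_le_sup hPD hoff ?_ (hopt (hΩ hfeas))
  rw [add_mulVec]
  gcongr

end QuadraticObjective

section FeasiblePrices

variable {ι G : Type*} [AddCommGroup G] [LinearOrder G]

/-- The feasible set of the price optimization problem: at most `k` prices differ from the current
prices `p0`, and each price `p i` that does is at distance at least `δ i` from `p0 i`. The number of
changed prices is an `ncard`, which is `0` on infinite sets, so `ι` is meant to be finite. -/
def feasiblePrices (p0 δ : ι → G) (k : ℕ) : Set (ι → G) :=
  {p | {i | p i ≠ p0 i}.ncard ≤ k ∧ ∀ i, p i = p0 i ∨ p0 i + δ i ≤ p i ∨ p i ≤ p0 i - δ i}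

theorem mapsTo_sup_feasiblePrices [IsOrderedAddMonoid G] [Finite ι] {p0 δ c : ι → G} (k : ℕ)
    (hδ : 0 ≤ δ) (hc : c ≤ p0 - δ) :
    Set.MapsTo (· ⊔ c) (feasiblePrices p0 δ k) (feasiblePrices p0 δ k) := by
  rintro p ⟨hcard, hgap⟩
  have hc0 : c ≤ p0 := hc.trans (sub_le_self p0 hδ)
  have hchanged : {i | (p ⊔ c) i ≠ p0 i} ⊆ {i | p i ≠ p0 i} := fun i hi hpi ↦
    hi (by simpa [hpi] using hc0 i)
  refine ⟨(Set.ncard_le_ncard hchanged).trans hcard, fun i ↦ ?_⟩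
  rcases le_total (c i) (p i) with h | h
  · simpa [h] using hgap i
  · exact .inr (.inr (by simpa [h] using hc i))

end FeasiblePrices

theorem constrained_optimum_profitable {n k : ℕ}
    (D : Matrix (Fin n) (Fin n) ℝ) (a c p0 δ : Fin n → ℝ)
    (S : Matrix (Fin n) (Fin n) ℝ) (hS : S = D + Dᵀ)
    (hPD : S.PosDef) (hoff : ∀ i j : Fin n, i ≠ j → S i j ≤ 0)
    (ha : ∀ i, 0 < a i) (hc : ∀ i, 0 < c i)
    (hdc : ∀ i, 0 ≤ (a - D.mulVec c) i)
    (hδ : ∀ i, 0 ≤ δ i) (hA3 : ∀ i, c i ≤ p0 i - δ i)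
    (Q : (Fin n → ℝ) → ℝ)
    (hQ : ∀ p, Q p = (1/2) * (p ⬝ᵥ S.mulVec p) - (a + Dᵀ.mulVec c) ⬝ᵥ p)
    (Ω : Set (Fin n → ℝ))
    (hΩ : Ω = {p | {i | p i ≠ p0 i}.ncard ≤ k ∧
      ∀ i, p i = p0 i ∨ p0 i + δ i ≤ p i ∨ p i ≤ p0 i - δ i})
    (pstar : Fin n → ℝ) (hfeas : pstar ∈ Ω)
    (hopt : ∀ p ∈ Ω, Q pstar ≤ Q p) :
    ∀ i, c i ≤ pstar i := by
  obtain rfl : Q = quadraticObjective S (a + Dᵀ *ᵥ c) := funext hQ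
  subst hS hΩ
  exact constrained_optimum_profitable_general hPD hoff (fun i ↦ sub_nonneg.1 (hdc i))
    (mapsTo_sup_feasiblePrices k hδ hA3) hfeas hopt
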